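/- For every x in the free group F, every n ∈ ℕ and every real number t, the number of elements w ∈ F with |w| = n and |w x| ≤ |x| − t is at most 2 · q^{(n−t)/2} (real power of q). This is the counting estimate behind the truncation operators Q_n^α used to prove the restricted weak type (2,2) bound for λ(χ_n). -/

import Mathlib

open scoped ENNReal

noncomputable section

/-- Word length on the free group: the number of letters of the reduced word. -/
def wlen {α : Type*} [DecidableEq α] (x : FreeGroup α) : ℕ := x.toWord.length

open FreeGroup in
theorem exists_cancel {α : Type*} (w : List (α × Bool)) :
    ∀ x : List (α × Bool), IsReduced w → IsReduced x →
      ∃ u c v, w = u ++ invRev c ∧ x = c ++ v ∧ IsReduced (u ++ v) := by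
  induction w using List.reverseRecOn with
  | nil => intro x _ hx; exact ⟨[], [], x, by simp, by simp, by simpa using hx⟩
  | append_singleton w a ih =>
    intro x hw hx
    rcases x with _ | ⟨b, x⟩
    · exact ⟨w ++ [a], [], [], by simp, by simp, by simpa using hw⟩
    · by_cases hab : a.1 = b.1 → a.2 = b.2
      · refine ⟨w ++ [a], [], b :: x, by simp, by simp, ?_⟩
        unfold FreeGroup.IsReduced at *
        rw [List.isChain_append]
        refine ⟨hw, hx, ?_⟩
        simpa using hab
      · obtain ⟨u, c, v, h1, h2, h3⟩ := ih x (hw.infix ⟨[], [a], by simp⟩)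
          (hx.infix ⟨[b], [], by simp⟩)
        refine ⟨u, b :: c, v, ?_, by simp [h2], h3⟩
        obtain ⟨a1, a2⟩ := a
        obtain ⟨b1, b2⟩ := b
        simp only [Classical.not_imp] at hab
        obtain ⟨h4, h5⟩ := hab
        subst h4
        rw [invRev_cons, h1, List.append_assoc]
        congr 2
        cases a2 <;> cases b2 <;> simp_all [invRev]

open FreeGroup in
theorem wlen_cancel {α : Type*} [DecidableEq α] (w x : FreeGroup α) :
    ∃ u c v, w.toWord = u ++ invRev c ∧ x.toWord = c ++ v ∧
      wlen (w * x) = u.length + v.length := by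
  obtain ⟨u, c, v, h1, h2, h3⟩ :=
    exists_cancel w.toWord x.toWord isReduced_toWord isReduced_toWord
  refine ⟨u, c, v, h1, h2, ?_⟩
  have : w * x = mk (u ++ v) := by
    rw [← mk_toWord (x := w), ← mk_toWord (x := x), h1, h2]
    simp only [← mul_mk, ← inv_mk]
    group
  rw [wlen, this, toWord_mk, h3.reduce_eq, List.length_append]

/-- Words of length `k` that may follow the letter `s`. -/
def wordsAfter {r : ℕ} : ℕ → Fin r × Bool → Finset (List (Fin r × Bool))
  | 0, _ => {[]}
  | k + 1, s => (Finset.univ.erase (s.1, !s.2)).biUnion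
      fun b => (wordsAfter k b).image (List.cons b)

theorem card_wordsAfter {r : ℕ} (k : ℕ) :
    ∀ s : Fin r × Bool, (wordsAfter k s).card ≤ (2 * r - 1) ^ k := by
  induction k with
  | zero => intro s; simp [wordsAfter]
  | succ k ih =>
    intro s
    rw [wordsAfter, pow_succ']
    refine (Finset.card_biUnion_le_card_mul _ _ ((2 * r - 1) ^ k)
      fun b _ => Finset.card_image_le.trans (ih b)).trans ?_
    rw [Finset.card_erase_of_mem (Finset.mem_univ _)]
    simp [mul_comm]

theorem mem_wordsAfter {r : ℕ} (l : List (Fin r × Bool)) :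
    ∀ s : Fin r × Bool, FreeGroup.IsReduced (s :: l) → l ∈ wordsAfter l.length s := by
  induction l with
  | nil => intro s _; simp [wordsAfter]
  | cons b l ih =>
    intro s h
    rw [FreeGroup.isReduced_cons_cons] at h
    simp only [List.length_cons, wordsAfter, Finset.mem_biUnion, Finset.mem_image]
    refine ⟨b, ?_, l, ih b h.2, rfl⟩
    simp only [Finset.mem_erase, Finset.mem_univ, and_true]
    rintro rfl
    simpa using h.1

/-- All reduced words of length `k`. -/
def wordsAll (r : ℕ) : ℕ → Finset (List (Fin r × Bool))
  | 0 => {[]}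
  | k + 1 => Finset.univ.biUnion fun b => (wordsAfter k b).image (List.cons b)

theorem card_wordsAll {r : ℕ} (hr : 2 ≤ r) (k : ℕ) :
    (wordsAll r k).card ≤ 2 * (2 * r - 1) ^ k := by
  cases k with
  | zero => simp [wordsAll]
  | succ k =>
    rw [wordsAll, pow_succ']
    refine (Finset.card_biUnion_le_card_mul _ _ ((2 * r - 1) ^ k)
      fun b _ => Finset.card_image_le.trans (card_wordsAfter k b)).trans ?_
    rw [← mul_assoc]
    apply Nat.mul_le_mul_right
    simp
    omega

theorem mem_wordsAll {r : ℕ} (l : List (Fin r × Bool)) (h : FreeGroup.IsReduced l) :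
    l ∈ wordsAll r l.length := by
  cases l with
  | nil => simp [wordsAll]
  | cons b l =>
    simp only [List.length_cons, wordsAll, Finset.mem_biUnion, Finset.mem_image]
    exact ⟨b, Finset.mem_univ _, l, mem_wordsAfter l b h, rfl⟩

theorem drop_invRev {α : Type*} (u c v : List (α × Bool)) (k : ℕ) (hu : u.length ≤ k)
    (hk : k ≤ u.length + c.length) :
    (u ++ FreeGroup.invRev c).drop k =
      FreeGroup.invRev ((c ++ v).take (u.length + c.length - k)) := by
  have h0 : u.drop k = [] := List.drop_eq_nil_of_le hu
  rw [List.drop_append, h0, List.nil_append,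
    List.take_append_of_le_length (by omega)]
  simp only [FreeGroup.invRev]
  rw [List.drop_reverse, List.length_map, ← List.map_take]
  congr 3
  omega

/-- For every `x` in the free group, every `n ∈ ℕ` and every real `t`, the number of
`w` with `|w| = n` and `|w x| ≤ |x| - t` is at most `2 q^{(n-t)/2}`. -/
theorem count_truncated_words
    (r : ℕ) (hr : 2 ≤ r) (q : ℕ) (hq : q = 2 * r - 1)
    (x : FreeGroup (Fin r)) (n : ℕ) (t : ℝ) :
    ({w : FreeGroup (Fin r) |
        wlen w = n ∧ (wlen (w * x) : ℝ) ≤ (wlen x : ℝ) - t}.encard : ℝ≥0∞)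
      ≤ 2 * (q : ℝ≥0∞) ^ (((n : ℝ) - t) / 2) := by
  have key : ∀ w : FreeGroup (Fin r), wlen w = n →
      (wlen (w * x) : ℝ) ≤ (wlen x : ℝ) - t →
      ∃ u c v, w.toWord = u ++ FreeGroup.invRev c ∧ x.toWord = c ++ v ∧
        u.length + c.length = n ∧ (u.length : ℝ) ≤ ((n : ℝ) - t) / 2 := by
    intro w hw h
    obtain ⟨u, c, v, h1, h2, h3⟩ := wlen_cancel w x
    have h4 : u.length + c.length = n := by
      rw [← hw, wlen, h1]; simp
    refine ⟨u, c, v, h1, h2, h4, ?_⟩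
    rw [h3, wlen, h2, List.length_append] at h
    rw [← h4]
    push_cast at h ⊢
    linarith
  by_cases hneg : ((n : ℝ) - t) / 2 < 0
  · have : {w : FreeGroup (Fin r) |
        wlen w = n ∧ (wlen (w * x) : ℝ) ≤ (wlen x : ℝ) - t} = ∅ := by
      ext w
      simp only [Set.mem_setOf_eq, Set.mem_empty_iff_false, iff_false]
      rintro ⟨hw, h⟩
      obtain ⟨u, c, v, -, -, -, h5⟩ := key w hw h
      have : (0 : ℝ) ≤ u.length := Nat.cast_nonneg _
      linarith
    rw [this]
    simp
  · push Not at hneg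
    obtain ⟨k, hk⟩ : ∃ k, k = min n ⌊((n : ℝ) - t) / 2⌋₊ := ⟨_, rfl⟩
    have hkn : k ≤ n := hk ▸ min_le_left _ _
    have hkt : (k : ℝ) ≤ ((n : ℝ) - t) / 2 :=
      (Nat.cast_le.2 (hk ▸ min_le_right _ _)).trans (Nat.floor_le hneg)
    have hcard : {w : FreeGroup (Fin r) |
        wlen w = n ∧ (wlen (w * x) : ℝ) ≤ (wlen x : ℝ) - t}.encard ≤
        ((wordsAll r k : Finset _) : Set (List (Fin r × Bool))).encard := by
      apply Set.encard_le_encard_of_injOn (f := fun w => w.toWord.take k)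
      · rintro w ⟨hw, -⟩
        have h1 : (w.toWord.take k).length = k := by
          rw [List.length_take]; unfold wlen at hw; omega
        have h2 := mem_wordsAll (w.toWord.take k)
          (FreeGroup.isReduced_toWord.infix (List.take_prefix _ _).isInfix)
        rw [h1] at h2
        exact h2
      · have hd : ∀ w : FreeGroup (Fin r), wlen w = n →
            (wlen (w * x) : ℝ) ≤ (wlen x : ℝ) - t →
            w.toWord.drop k = FreeGroup.invRev (x.toWord.take (n - k)) := by
          intro w hw h
          obtain ⟨u, c, v, h1, h2, h3, h4⟩ := key w hw h
          rw [h1, h2, ← h3]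
          apply drop_invRev
          · rw [hk]
            exact le_min (by omega) (Nat.le_floor h4)
          · omega
        rintro w ⟨hw, h⟩ w' ⟨hw', h'⟩ he
        apply FreeGroup.toWord_injective
        rw [← List.take_append_drop k w.toWord, ← List.take_append_drop k w'.toWord,
          hd w hw h, hd w' hw' h']
        exact congrArg (· ++ _) he
    rw [Set.encard_coe_eq_coe_finsetCard] at hcard
    have h1 : ((wordsAll r k).card : ℕ∞) ≤ ((2 * q ^ k : ℕ) : ℕ∞) := by
      rw [hq]; exact_mod_cast card_wordsAll hr k
    have h2 := ENat.toENNReal_le.2 (hcard.trans h1)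
    refine h2.trans ?_
    rw [ENat.toENNReal_coe]
    push_cast
    gcongr
    rw [← ENNReal.rpow_natCast]
    apply ENNReal.rpow_le_rpow_of_exponent_le _ hkt
    have : 1 ≤ q := by omega
    exact_mod_cast this
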